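/- Let R be a commutative noetherian local ring with residue field k, and let M and N be objects of the derived category D(R). Suppose M is bounded below with finitely generated homology in each degree, N is a perfect complex which is nonzero in D(R), and the derived tensor product M ⊗^L_R N is a perfect complex. Then M is a perfect complex. -/

import Mathlib

open CategoryTheory Limits MonoidalCategory

variable (R : Type) [CommRing R]

instance : (curriedTensor (ModuleCat R)).Additive where
  map_add := by intros; ext x; simp [curriedTensor, MonoidalPreadditive.add_whiskerRight]

/-- A cochain complex of `R`-modules is *perfect* if it is quasi-isomorphic to
(hence isomorphic in `D(R)` to) a bounded complex of finitely generated projective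
modules. -/
def IsPerfect (M : CochainComplex (ModuleCat R) ℤ) : Prop :=
  ∃ (P : CochainComplex (ModuleCat R) ℤ) (f : P ⟶ M), QuasiIso f ∧
    (∃ a b : ℤ, ∀ i : ℤ, (i < a ∨ b < i) → IsZero (P.X i)) ∧
    (∀ i : ℤ, Module.Finite R (P.X i) ∧ Module.Projective R (P.X i))

/-- `f : P ⟶ M` is a projective resolution: a quasi-isomorphism from a bounded-above
(i.e. homologically bounded-below) complex of projective modules.  Such a complex is
K-projective, so it computes derived tensor products. -/
def IsProjRes {M P : CochainComplex (ModuleCat R) ℤ} (f : P ⟶ M) : Prop :=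
  QuasiIso f ∧ (∃ b : ℤ, ∀ i : ℤ, b < i → IsZero (P.X i)) ∧
    ∀ i : ℤ, Module.Projective R (P.X i)

/-!
Let `k` be the residue field. If `X` in `D(R)` is bounded above with finitely generated cohomology,
a minimal cover `R^m` of the top cohomology module lifts to a map from a shift of `R^m` to `X`, and
maps to shifts of `k` extend along it. Passing to the cone of this map lowers the top degree and
preserves the vanishing of `Hom(X, k[-n])` for `n ≪ 0`. Once the top degree lies in the range where
this `Hom` vanishes, the cone is zero by Nakayama's lemma. So `X` is perfect as soon as
`Hom(X, k[-n]) = 0` for `n ≪ 0`.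

If `L` is nonzero and bounded above with finitely generated cohomology, Nakayama's lemma also
provides maps `R[-t] ⟶ L ⟶ k[-t]` whose composition is the residue map. Through the multiplication
`k ⊗ k ⟶ k` they make `Hom(K, k[-n])` a retract of `Hom(K ⊗ L, k[-n - t])`, so that the vanishing
condition passes from `K ⊗ L` to `K`.
-/

universe w v u

/-- Exactness of the complex `Hom(K, W)` at `Hom(K.X n, W)`: every cocycle `K.X n ⟶ W` is a
coboundary. -/
def HomExactAt {C : Type u} [Category.{v} C] [HasZeroMorphisms C] (K : CochainComplex C ℤ) (W : C)
    (n : ℤ) : Prop :=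
  ∀ ψ : K.X n ⟶ W, (∀ i, K.d i n ≫ ψ = 0) → ∃ s : K.X (n + 1) ⟶ W, K.d n (n + 1) ≫ s = ψ

section SingleHomotopy

open CochainComplex CochainComplex.HomComplex HomologicalComplex

variable {C : Type u} [Category.{v} C] [Abelian C] {K : CochainComplex C ℤ} {E : C} {n : ℤ}

lemma nonempty_homotopy_zero_iff_toSingle (g : K ⟶ (CochainComplex.singleFunctor C n).obj E) :
    Nonempty (Homotopy g 0) ↔
      ∃ s : K.X (n + 1) ⟶ E, K.d n (n + 1) ≫ s = g.f n ≫ (singleObjXSelf (.up ℤ) n E).hom := by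
  have hg : Cochain.toSingleEquiv (add_zero n) (Cochain.ofHom g) =
      g.f n ≫ (singleObjXSelf (.up ℤ) n E).hom := by
    simp [Cochain.toSingleEquiv]
  have hδ (s : K.X (n + 1) ⟶ E) : δ (-1) 0 (Cochain.toSingleMk s (by lia : n + 1 + -1 = n)) =
      Cochain.toSingleMk (K.d n (n + 1) ≫ s) (add_zero n) := by
    rw [Cochain.δ_toSingleMk s _ 0 n (add_zero n), Int.negOnePow_zero, one_smul]
  rw [(Cochain.equivHomotopy g 0).nonempty_congr, nonempty_subtype, ← hg,
    (Cochain.toSingleEquiv (by lia : n + 1 + -1 = n)).symm.surjective.exists]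
  refine exists_congr fun s ↦ ?_
  rw [Cochain.ofHom_zero, add_zero, ← AddEquiv.symm_apply_eq, eq_comm]
  exact Eq.congr_left (hδ s)

lemma nonempty_homotopy_zero_iff_fromSingle (g : (CochainComplex.singleFunctor C n).obj E ⟶ K) :
    Nonempty (Homotopy g 0) ↔
      ∃ s : E ⟶ K.X (n - 1), s ≫ K.d (n - 1) n = (singleObjXSelf (.up ℤ) n E).inv ≫ g.f n := by
  have hg : Cochain.fromSingleEquiv (add_zero n) (Cochain.ofHom g) =
      (singleObjXSelf (.up ℤ) n E).inv ≫ g.f n := by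
    simp [Cochain.fromSingleEquiv]
  have hδ (s : E ⟶ K.X (n - 1)) : δ (-1) 0 (Cochain.fromSingleMk s (by lia : n + -1 = n - 1)) =
      Cochain.fromSingleMk (s ≫ K.d (n - 1) n) (add_zero n) :=
    Cochain.δ_fromSingleMk s _ 0 n (add_zero n)
  rw [(Cochain.equivHomotopy g 0).nonempty_congr, nonempty_subtype, ← hg,
    (Cochain.fromSingleEquiv (by lia : n + -1 = n - 1)).symm.surjective.exists]
  refine exists_congr fun s ↦ ?_
  rw [Cochain.ofHom_zero, add_zero, ← AddEquiv.symm_apply_eq, eq_comm]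
  exact Eq.congr_left (hδ s)

lemma nonempty_homotopy_zero_of_homologyMap_eq_zero [Projective E]
    (g : (single C (.up ℤ) n).obj E ⟶ K) (hg : homologyMap g n = 0) :
    Nonempty (Homotopy g 0) := by
  let z := (singleObjCyclesSelfIso (.up ℤ) n E).inv ≫ cyclesMap g n
  have hz : z ≫ K.homologyπ n = 0 := by
    simp only [z, Category.assoc, ← homologyπ_naturality, hg, comp_zero]
  have hK := ShortComplex.exact_of_g_is_cokernel
    (ShortComplex.mk _ _ (K.toCycles_comp_homologyπ (n - 1) n))
    (K.homologyIsCokernel (n - 1) n (by simp))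
  refine (nonempty_homotopy_zero_iff_fromSingle g).2 ⟨hK.liftFromProjective z hz, ?_⟩
  rw [← K.toCycles_i (n - 1) n, reassoc_of% hK.liftFromProjective_comp z hz]
  simp [z, singleObjCyclesSelfIso_inv_iCycles_assoc]

lemma homologyMap_fromSingle_surjective (E : C) [Projective E] (K : CochainComplex C ℤ) (n : ℤ) :
    Function.Surjective
      fun g : (single C (.up ℤ) n).obj E ⟶ K ↦ homologyMap g n := by
  intro φ
  let z := Projective.factorThru ((singleObjHomologySelfIso _ n E).inv ≫ φ) (K.homologyπ n)
  refine ⟨mkHomFromSingle (z ≫ K.iCycles n) (by simp), ?_⟩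
  have hz : cyclesMap (mkHomFromSingle (z ≫ K.iCycles n) (by simp)) n =
      (singleObjCyclesSelfIso (.up ℤ) n E).hom ≫ z := by
    rw [← cancel_mono (K.iCycles n), cyclesMap_i, mkHomFromSingle_f, singleObjCyclesSelfIso_hom]
    simp only [Category.assoc]
  rw [← cancel_epi (homologyπ _ _), homologyπ_naturality, hz, Category.assoc,
    Projective.factorThru_comp, ← homologyπ_singleObjHomologySelfIso_hom_assoc]
  simp only [Iso.hom_inv_id_assoc]

lemma homologyMap_toSingle_surjective (K : CochainComplex C ℤ) (E : C) (n : ℤ)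
    [K.IsStrictlyLE n] :
    Function.Surjective fun g : K ⟶ (single C (.up ℤ) n).obj E ↦ homologyMap g n := by
  intro φ
  have hd : K.d n (n + 1) = 0 := (K.isZero_of_isStrictlyLE n (n + 1) (by lia)).eq_of_tgt _ _
  have := K.isIso_homologyι n (n + 1) (by simp) hd
  refine ⟨mkHomToSingle (K.pOpcycles n ≫ inv (K.homologyι n) ≫ φ ≫
    (singleObjHomologySelfIso _ n E).hom) (by simp), ?_⟩
  rw [← cancel_epi (K.homologyπ n), homologyπ_naturality, ← cancel_mono
    (singleObjHomologySelfIso (.up ℤ) n E).hom, Category.assoc,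
    homologyπ_singleObjHomologySelfIso_hom, singleObjCyclesSelfIso_hom, cyclesMap_i_assoc,
    mkHomToSingle_f]
  simp [← homology_π_ι_assoc]

end SingleHomotopy

section DerivedSingle

open DerivedCategory Pretriangulated
open HomologicalComplex hiding homologyFunctor

variable {C : Type u} [Category.{v} C] [Abelian C] [HasDerivedCategory.{w} C]

lemma Q_map_surjective (K L : CochainComplex C ℤ) [K.IsKProjective] :
    Function.Surjective (Q.map : (K ⟶ L) → (Q.obj K ⟶ Q.obj L)) := by
  have h := (CochainComplex.IsKProjective.Qh_map_bijective K
    ((HomotopyCategory.quotient _ _).obj L)).surjective.comp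
      (HomotopyCategory.quotient _ _).map_surjective
  exact h

lemma Q_map_eq_zero_iff {K L : CochainComplex C ℤ} [K.IsKProjective] (g : K ⟶ L) :
    Q.map g = 0 ↔ Nonempty (Homotopy g 0) := by
  refine ⟨fun h ↦ ?_, fun ⟨h⟩ ↦ (DerivedCategory.Q_map_eq_of_homotopy C h).trans (Q.map_zero K L)⟩
  rw [← HomotopyCategory.quotient_map_eq_zero_iff]
  exact (CochainComplex.IsKProjective.Qh_map_bijective K
    ((HomotopyCategory.quotient _ _).obj L)).injective (h.trans (Qh.map_zero _ _).symm)

instance isKProjective_single (n : ℤ) (E : C) [Projective E] :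
    CochainComplex.IsKProjective ((single C (.up ℤ) n).obj E) := by
  have (i : ℤ) : Projective (((single C (.up ℤ) n).obj E).X i) := by
    by_cases hi : i = n
    · exact Projective.of_iso (singleObjXIsoOfEq (.up ℤ) n E i hi).symm inferInstance
    · exact (isZero_single_obj_X (.up ℤ) n E i hi).projective
  exact CochainComplex.isKProjective_of_projective _ n

lemma homologyFunctor_map_Q_map_eq_zero_iff {K L : CochainComplex C ℤ} (g : K ⟶ L) (n : ℤ) :
    (homologyFunctor C n).map (Q.map g) = 0 ↔ homologyMap g n = 0 := by
  rw [← cancel_mono ((homologyFunctorFactors C n).hom.app L),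
    homologyFunctorFactors_hom_naturality, zero_comp]
  exact ⟨fun h ↦ (cancel_epi ((homologyFunctorFactors C n).hom.app K)).1 (h.trans comp_zero.symm),
    fun h ↦ (congrArg _ h).trans comp_zero⟩

lemma homologyFunctor_map_surjective_of_homologyMap_surjective {K L : CochainComplex C ℤ} {n : ℤ}
    (h : Function.Surjective fun g : K ⟶ L ↦ homologyMap g n) :
    Function.Surjective fun g : Q.obj K ⟶ Q.obj L ↦ (homologyFunctor C n).map g := by
  intro φ
  obtain ⟨g, hg⟩ := h ((homologyFunctorFactors C n).inv.app K ≫ φ ≫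
    (homologyFunctorFactors C n).hom.app L)
  refine ⟨Q.map g, ?_⟩
  dsimp only at hg ⊢
  rw [← cancel_mono ((homologyFunctorFactors C n).hom.app L), homologyFunctorFactors_hom_naturality,
    hg]
  exact (homologyFunctorFactors C n).hom_inv_id_app_assoc K _

lemma homologyFunctor_map_fromSingle_surjective (E : C) [Projective E] (X : DerivedCategory C)
    (n : ℤ) : Function.Surjective
      fun f : (singleFunctor C n).obj E ⟶ X ↦ (homologyFunctor C n).map f := by
  intro φ
  let e := Q.objObjPreimageIso X
  obtain ⟨g, hg⟩ : ∃ g : (singleFunctor C n).obj E ⟶ Q.obj (Q.objPreimage X),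
      (homologyFunctor C n).map g = φ ≫ (homologyFunctor C n).map e.inv :=
    homologyFunctor_map_surjective_of_homologyMap_surjective
      (homologyMap_fromSingle_surjective E _ n) _
  refine ⟨g ≫ e.hom, ?_⟩
  change (homologyFunctor C n).map (g ≫ e.hom) = φ
  rw [Functor.map_comp, hg, Category.assoc, ← Functor.map_comp, e.inv_hom_id,
    CategoryTheory.Functor.map_id, Category.comp_id]

lemma homologyFunctor_map_toSingle_surjective (X : DerivedCategory C) (E : C) (n : ℤ)
    [X.IsLE n] : Function.Surjective
      fun f : X ⟶ (singleFunctor C n).obj E ↦ (homologyFunctor C n).map f := by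
  intro φ
  obtain ⟨K, _, ⟨e⟩⟩ := X.exists_iso_Q_obj_of_isLE n
  obtain ⟨g, hg⟩ : ∃ g : Q.obj K ⟶ (singleFunctor C n).obj E,
      (homologyFunctor C n).map g = (homologyFunctor C n).map e.inv ≫ φ :=
    homologyFunctor_map_surjective_of_homologyMap_surjective
      (homologyMap_toSingle_surjective K E n) _
  exact ⟨e.hom ≫ g, by simp [hg, ← Functor.map_comp_assoc]⟩

lemma homologyFunctor_map_fromSingle_injective (E : C) [Projective E] (X : DerivedCategory C)
    (n : ℤ) : Function.Injective
      fun f : (singleFunctor C n).obj E ⟶ X ↦ (homologyFunctor C n).map f := by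
  suffices ∀ (K : CochainComplex C ℤ) (f : (singleFunctor C n).obj E ⟶ Q.obj K),
      (homologyFunctor C n).map f = 0 → f = 0 by
    intro f f' hf
    let e := Q.objObjPreimageIso X
    rw [← sub_eq_zero, ← cancel_mono e.inv, zero_comp]
    exact this _ _ (by rw [Functor.map_comp, Functor.map_sub, sub_eq_zero.2 hf, zero_comp])
  intro K f hf
  obtain ⟨g, rfl⟩ := Q_map_surjective ((single C (.up ℤ) n).obj E) K f
  refine (Q_map_eq_zero_iff g).2 (nonempty_homotopy_zero_of_homologyMap_eq_zero g ?_)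
  exact (homologyFunctor_map_Q_map_eq_zero_iff g n).1 hf

lemma exists_fac_of_homologyFunctor_map_fac {X : DerivedCategory C} {n : ℤ} [X.IsLE n] {A W : C}
    [Projective A] (f : (singleFunctor C n).obj A ⟶ X)
    (hf : ∀ φ : (homologyFunctor C n).obj ((singleFunctor C n).obj A) ⟶
      (homologyFunctor C n).obj ((singleFunctor C n).obj W),
        ∃ φ', (homologyFunctor C n).map f ≫ φ' = φ)
    (j : ℤ) (h : (singleFunctor C n).obj A ⟶ (singleFunctor C j).obj W) :
    ∃ h', f ≫ h' = h := by
  by_cases hnj : n = j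
  · subst hnj
    obtain ⟨φ', hφ'⟩ := hf ((homologyFunctor C n).map h)
    obtain ⟨h', rfl⟩ := homologyFunctor_map_toSingle_surjective X W n φ'
    exact ⟨h', homologyFunctor_map_fromSingle_injective A _ n (by simpa using hφ')⟩
  · have hW : IsZero ((homologyFunctor C n).obj ((singleFunctor C j).obj W)) := by
      obtain hnj | hnj := lt_or_gt_of_ne hnj
      · exact isZero_of_isGE _ j n hnj
      · exact isZero_of_isLE _ j n hnj
    exact ⟨0, homologyFunctor_map_fromSingle_injective A _ n (hW.eq_of_tgt _ _)⟩

lemma hom_obj₃_eq_zero {T : Triangle (DerivedCategory C)} (hT : T ∈ distTriang _) {W : C} {n : ℤ}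
    (h₂ : ∀ g : T.obj₂ ⟶ (singleFunctor C n).obj W, g = 0)
    (h₁ : ∀ h : T.obj₁ ⟶ (singleFunctor C (n + 1)).obj W, ∃ h', T.mor₁ ≫ h' = h)
    (g : T.obj₃ ⟶ (singleFunctor C n).obj W) : g = 0 := by
  obtain ⟨h, rfl⟩ := T.yoneda_exact₃ hT g (h₂ _)
  let e := ((singleFunctors C).shiftIso 1 n (n + 1) (add_comm _ _)).app W
  obtain ⟨h', hh'⟩ := (shiftFunctor (DerivedCategory C) (1 : ℤ)).map_surjective (h ≫ e.inv)
  obtain ⟨h'', rfl⟩ := h₁ h'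
  rw [← cancel_mono e.inv, Category.assoc, ← hh', Functor.map_comp, zero_comp,
    comp_distTriang_mor_zero₃₁_assoc _ hT, zero_comp]

lemma isLE_of_distTriang {X Y Z : DerivedCategory C} {f : X ⟶ Y} {g : Y ⟶ Z} {h : Z ⟶ X⟦(1 : ℤ)⟧}
    (hT : Triangle.mk f g h ∈ distTriang _) (n : ℤ) [X.IsLE (n + 1)] [Y.IsLE (n + 1)]
    [Epi ((homologyFunctor C (n + 1)).map f)] : Z.IsLE n := by
  refine (isLE_iff _ _).2 fun i hi ↦
    (HomologySequence.exact₃ _ hT i (i + 1) rfl).isZero_X₂ ?_ ?_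
  · obtain rfl | hi : i = n + 1 ∨ n + 1 < i := by lia
    · exact (HomologySequence.epi_homologyMap_mor₁_iff _ hT (n + 1)).1 ‹_›
    · exact (Y.isZero_of_isLE (n + 1) i hi).eq_of_src _ _
  · exact (X.isZero_of_isLE (n + 1) (i + 1) (by lia)).eq_of_tgt _ _

lemma exists_isLE_and_not_isZero_homologyFunctor_obj {X : DerivedCategory C} (hX : ¬ IsZero X)
    (b : ℤ) [X.IsLE b] : ∃ t ≤ b, X.IsLE t ∧ ¬ IsZero ((homologyFunctor C t).obj X) := by
  have hb (i : ℤ) (hi : ¬ IsZero ((homologyFunctor C i).obj X)) : i ≤ b :=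
    not_lt.1 fun hbi ↦ hi (X.isZero_of_isLE b i hbi)
  have hX' : ∃ i, ¬ IsZero ((homologyFunctor C i).obj X) := by
    by_contra! h
    have : IsIso (0 : X ⟶ X) := (isIso_iff C _).2 fun n ↦
      ⟨0, (h n).eq_of_src _ _, (h n).eq_of_src _ _⟩
    exact hX ((IsZero.iff_id_eq_zero X).2 ((cancel_mono (0 : X ⟶ X)).1 (by simp)))
  obtain ⟨t, ht, htmax⟩ := Int.exists_greatest_of_bdd ⟨b, hb⟩ hX'
  exact ⟨t, hb t ht, (isLE_iff X t).2 fun i hi ↦ not_not.1 fun h ↦ (htmax i h).not_gt hi, ht⟩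

lemma homExactAt_iff (K : CochainComplex C ℤ) [K.IsKProjective] (W : C) (n : ℤ) :
    HomExactAt K W n ↔ ∀ g : Q.obj K ⟶ (singleFunctor C n).obj W, g = 0 := by
  refine ⟨fun h g ↦ ?_, fun h ψ hψ ↦ ?_⟩
  · obtain ⟨g, rfl⟩ := Q_map_surjective K ((single C (.up ℤ) n).obj W) g
    have hg (i : ℤ) : K.d i n ≫ g.f n ≫ (singleObjXSelf (.up ℤ) n W).hom = 0 := by
      rw [← g.comm_assoc, single_obj_d, zero_comp, comp_zero]
    exact (Q_map_eq_zero_iff g).2 ((nonempty_homotopy_zero_iff_toSingle g).2 (h _ hg))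
  · have hψs : (mkHomToSingle ψ fun i _ ↦ hψ i).f n ≫ (singleObjXSelf (.up ℤ) n W).hom = ψ := by
      rw [mkHomToSingle_f, Category.assoc, Iso.inv_hom_id, Category.comp_id]
    obtain ⟨s, hs⟩ := (nonempty_homotopy_zero_iff_toSingle (mkHomToSingle ψ fun i _ ↦ hψ i)).1
      ((Q_map_eq_zero_iff _).1 (h _))
    exact ⟨s, hs.trans hψs⟩

end DerivedSingle
section PerfectComplex

open DerivedCategory
open HomologicalComplex hiding homologyFunctor

variable {S : Type u} [Ring S]

/-- A bounded complex of finitely generated projective modules; these represent the perfect objects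
of the derived category. -/
structure IsStrictlyPerfect (F : CochainComplex (ModuleCat.{u} S) ℤ) : Prop where
  isZero_X : ∃ a b : ℤ, ∀ i, i < a ∨ b < i → IsZero (F.X i)
  finite_X (i : ℤ) : Module.Finite S (F.X i)
  projective_X (i : ℤ) : Module.Projective S (F.X i)

/-- A bounded above complex of projective modules; tensoring with it computes the derived tensor
product. -/
structure IsBoundedAboveProjective (F : CochainComplex (ModuleCat.{u} S) ℤ) : Prop where
  isZero_X : ∃ b : ℤ, ∀ i, b < i → IsZero (F.X i)
  projective_X (i : ℤ) : Module.Projective S (F.X i)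

lemma IsBoundedAboveProjective.isKProjective {F : CochainComplex (ModuleCat.{u} S) ℤ}
    (hF : IsBoundedAboveProjective F) : F.IsKProjective := by
  obtain ⟨b, hb⟩ := hF.isZero_X
  have : F.IsStrictlyLE b := (F.isStrictlyLE_iff b).2 hb
  have (i : ℤ) : Projective (F.X i) := (IsProjective.iff_projective _).1 (hF.projective_X i)
  exact CochainComplex.isKProjective_of_projective F b

namespace IsStrictlyPerfect

variable {F G : CochainComplex (ModuleCat.{u} S) ℤ}

lemma isKProjective (hF : IsStrictlyPerfect F) : F.IsKProjective := by
  obtain ⟨_, b, h⟩ := hF.isZero_X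
  exact IsBoundedAboveProjective.isKProjective ⟨⟨b, fun i hi ↦ h i (.inr hi)⟩, hF.projective_X⟩

lemma shift (hF : IsStrictlyPerfect F) (n : ℤ) : IsStrictlyPerfect (F⟦n⟧) where
  isZero_X := by
    obtain ⟨a, b, h⟩ := hF.isZero_X
    exact ⟨a - n, b - n, fun i hi ↦ h (i + n) (by lia)⟩
  finite_X i := hF.finite_X (i + n)
  projective_X i := hF.projective_X (i + n)

lemma mappingCone (hF : IsStrictlyPerfect F) (hG : IsStrictlyPerfect G) (f : F ⟶ G) :
    IsStrictlyPerfect (CochainComplex.mappingCone f) := by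
  let e (i : ℤ) : (CochainComplex.mappingCone f).X i ≅ F.X (i + 1) ⊞ G.X i :=
    homotopyCofiber.XIsoBiprod f i (i + 1) rfl
  let e' (i : ℤ) : (F.X (i + 1) × G.X i) ≃ₗ[S] (CochainComplex.mappingCone f).X i :=
    (e i ≪≫ ModuleCat.biprodIsoProd _ _).toLinearEquiv.symm
  have := hF.finite_X
  have := hG.finite_X
  have := hF.projective_X
  have := hG.projective_X
  obtain ⟨a, b, h⟩ := hF.isZero_X
  obtain ⟨a', b', h'⟩ := hG.isZero_X
  refine ⟨⟨min (a - 1) a', max b b', fun i hi ↦ IsZero.of_iso ?_ (e i)⟩,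
    fun i ↦ Module.Finite.equiv (e' i), fun i ↦ Module.Projective.of_equiv (e' i)⟩
  exact (biprod_isZero_iff _ _).2 ⟨h _ (by lia), h' _ (by lia)⟩

lemma single (A : ModuleCat.{u} S) [Module.Finite S A] [Module.Projective S A] (n : ℤ) :
    IsStrictlyPerfect ((HomologicalComplex.single _ (.up ℤ) n).obj A) := by
  have h (i : ℤ) : Module.Finite S (((HomologicalComplex.single _ (.up ℤ) n).obj A).X i) ∧
      Module.Projective S (((HomologicalComplex.single _ (.up ℤ) n).obj A).X i) := by
    by_cases hi : i = n
    · let e := (singleObjXIsoOfEq (.up ℤ) n A i hi).toLinearEquiv.symm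
      exact ⟨Module.Finite.equiv e, Module.Projective.of_equiv e⟩
    · have := ModuleCat.subsingleton_of_isZero (isZero_single_obj_X (.up ℤ) n A i hi)
      exact ⟨inferInstance, inferInstance⟩
  exact ⟨⟨n, n, fun i hi ↦ isZero_single_obj_X (.up ℤ) n A i (by lia)⟩, fun i ↦ (h i).1,
    fun i ↦ (h i).2⟩

end IsStrictlyPerfect

variable [HasDerivedCategory.{w} (ModuleCat.{u} S)]

/-- A perfect object of the derived category of a ring. Unlike `IsPerfect`, it is stated up to
isomorphism in the derived category, which makes it usable in distinguished triangles. -/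
def IsPerfectObj (X : DerivedCategory (ModuleCat.{u} S)) : Prop :=
  ∃ F : CochainComplex (ModuleCat.{u} S) ℤ, IsStrictlyPerfect F ∧ Nonempty (Q.obj F ≅ X)

namespace IsPerfectObj

lemma single (A : ModuleCat.{u} S) [Module.Finite S A] [Module.Projective S A] (n : ℤ) :
    IsPerfectObj ((singleFunctor _ n).obj A) :=
  ⟨_, .single A n, ⟨Iso.refl _⟩⟩

lemma of_iso {X Y : DerivedCategory (ModuleCat.{u} S)} (e : X ≅ Y) (hX : IsPerfectObj X) :
    IsPerfectObj Y := by
  obtain ⟨F, hF, ⟨e'⟩⟩ := hX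
  exact ⟨F, hF, ⟨e' ≪≫ e⟩⟩

lemma of_isZero {X : DerivedCategory (ModuleCat.{u} S)} (hX : IsZero X) : IsPerfectObj X :=
  .of_iso ((Functor.map_isZero (singleFunctor _ 0) (ModuleCat.isZero_of_subsingleton _)).iso hX)
    (.single (ModuleCat.of S PUnit) 0)

lemma shift {X : DerivedCategory (ModuleCat.{u} S)} (hX : IsPerfectObj X) (n : ℤ) :
    IsPerfectObj (X⟦n⟧) := by
  obtain ⟨F, hF, ⟨e⟩⟩ := hX
  exact ⟨F⟦n⟧, hF.shift n, ⟨(Q.commShiftIso n).app F ≪≫ (shiftFunctor _ n).mapIso e⟩⟩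

open Pretriangulated

variable {T : Triangle (DerivedCategory (ModuleCat.{u} S))}

lemma obj₃ (hT : T ∈ distTriang _) (h₁ : IsPerfectObj T.obj₁) (h₂ : IsPerfectObj T.obj₂) :
    IsPerfectObj T.obj₃ := by
  obtain ⟨F, hF, ⟨e⟩⟩ := h₁
  obtain ⟨G, hG, ⟨e'⟩⟩ := h₂
  have := hF.isKProjective
  obtain ⟨f, hf⟩ := Q_map_surjective F G (e.hom ≫ T.mor₁ ≫ e'.inv)
  refine ⟨_, hF.mappingCone hG f, ⟨Triangle.π₃.mapIso (isoTriangleOfIso₁₂ _ _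
    (mappingCone_triangle_distinguished f) hT e e' ?_)⟩⟩
  change Q.map f ≫ e'.hom = e.hom ≫ T.mor₁
  simp [hf]

lemma obj₂ (hT : T ∈ distTriang _) (h₁ : IsPerfectObj T.obj₁) (h₃ : IsPerfectObj T.obj₃) :
    IsPerfectObj T.obj₂ :=
  obj₃ (inv_rot_of_distTriang _ hT) (h₃.shift (-1)) h₁

lemma exists_hom_single_eq_zero {X : DerivedCategory (ModuleCat.{u} S)} (hX : IsPerfectObj X) :
    ∃ a : ℤ, ∀ n < a, ∀ (W : ModuleCat.{u} S) (g : X ⟶ (singleFunctor _ n).obj W), g = 0 := by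
  obtain ⟨F, hF, ⟨e⟩⟩ := hX
  have := hF.isKProjective
  obtain ⟨a, b, h⟩ := hF.isZero_X
  refine ⟨a, fun n hn W g ↦ ?_⟩
  rw [← cancel_epi e.hom, comp_zero]
  refine (homExactAt_iff F W n).1 (fun ψ _ ↦ ⟨0, ?_⟩) _
  exact (h n (.inl hn)).eq_of_src _ _

end IsPerfectObj

variable {R} in
lemma isPerfect_iff [HasDerivedCategory.{w} (ModuleCat R)]
    (M : CochainComplex (ModuleCat R) ℤ) : IsPerfect R M ↔ IsPerfectObj (Q.obj M) := by
  constructor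
  · rintro ⟨F, f, hf, hF, hF'⟩
    exact ⟨F, ⟨hF, fun i ↦ (hF' i).1, fun i ↦ (hF' i).2⟩, ⟨asIso (Q.map f)⟩⟩
  · rintro ⟨F, hF, ⟨e⟩⟩
    have := hF.isKProjective
    obtain ⟨f, hf⟩ := Q_map_surjective F M e.hom
    refine ⟨F, f, ?_, hF.isZero_X, fun i ↦ ⟨hF.finite_X i, hF.projective_X i⟩⟩
    rw [← isIso_Q_map_iff_quasiIso, hf]
    infer_instance

end PerfectComplex

section LocalRing

open IsLocalRing TensorProduct

variable (S : Type u) [CommRing S] [IsLocalRing S] (H : Type v) [AddCommGroup H] [Module S H]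
  [Module.Finite S H]

lemma exists_surjective_lift_residueField :
    ∃ (m : ℕ) (π : (Fin m → S) →ₗ[S] H), Function.Surjective π ∧
      ∀ g : (Fin m → S) →ₗ[S] ResidueField S, ∃ g' : H →ₗ[S] ResidueField S, g' ∘ₗ π = g := by
  let b := Module.finBasis (ResidueField S) (ResidueField S ⊗[S] H)
  choose v hv using fun i ↦
    TensorProduct.mk_surjective S H (ResidueField S) residue_surjective (b i)
  refine ⟨_, Fintype.linearCombination S v, ?_, fun g ↦ ⟨(b.constr (ResidueField S)
    fun i ↦ g (Pi.single i 1)).restrictScalars S ∘ₗ TensorProduct.mk S _ H 1, ?_⟩⟩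
  · rw [← LinearMap.range_eq_top, Fintype.range_linearCombination]
    exact span_eq_top_of_tmul_eq_basis v b hv
  · ext i
    have := hv i
    simp_all

lemma exists_comp_eq_linearMap_residueField [Nontrivial H] :
    ∃ (x : S →ₗ[S] H) (y : H →ₗ[S] ResidueField S),
      y ∘ₗ x = Algebra.linearMap S (ResidueField S) := by
  obtain ⟨m, π, hπ, hlift⟩ := exists_surjective_lift_residueField S H
  obtain _ | m := m
  · exact absurd hπ.subsingleton (not_subsingleton H)
  · obtain ⟨y, hy⟩ := hlift (Algebra.linearMap S _ ∘ₗ LinearMap.proj 0)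
    refine ⟨π ∘ₗ LinearMap.single S (fun _ ↦ S) 0, y, ?_⟩
    rw [← LinearMap.comp_assoc, hy, LinearMap.comp_assoc, LinearMap.proj_comp_single_same,
      LinearMap.comp_id]

end LocalRing

section FiniteHomology

open DerivedCategory Pretriangulated

variable {S : Type u} [Ring S] [HasDerivedCategory.{w} (ModuleCat.{u} S)]

/-- An object of the derived category of a ring is homologically finite if its homology modules are
finitely generated. -/
def IsHomologicallyFinite (X : DerivedCategory (ModuleCat.{u} S)) : Prop :=
  ∀ i, Module.Finite S ((homologyFunctor (ModuleCat.{u} S) i).obj X)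

lemma isHomologicallyFinite_Q_obj_iff {K : CochainComplex (ModuleCat.{u} S) ℤ} :
    IsHomologicallyFinite (Q.obj K) ↔ ∀ i, Module.Finite S (K.homology i) :=
  forall_congr' fun i ↦ Module.Finite.equiv_iff
    ((homologyFunctorFactors (ModuleCat.{u} S) i).app K).toLinearEquiv

lemma IsHomologicallyFinite.of_iso {X Y : DerivedCategory (ModuleCat.{u} S)} (e : X ≅ Y)
    (hX : IsHomologicallyFinite X) : IsHomologicallyFinite Y := fun i ↦ by
  have := hX i
  exact Module.Finite.equiv ((homologyFunctor _ i).mapIso e).toLinearEquiv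

variable [IsNoetherianRing S]

lemma IsHomologicallyFinite.obj₃ {T : Triangle (DerivedCategory (ModuleCat.{u} S))}
    (hT : T ∈ distTriang _) (h₁ : IsHomologicallyFinite T.obj₁)
    (h₂ : IsHomologicallyFinite T.obj₂) : IsHomologicallyFinite T.obj₃ := fun i ↦ by
  have := h₁ (i + 1)
  have := h₂ i
  have := isNoetherian_of_range_eq_ker _ _ ((ShortComplex.moduleCat_exact_iff_range_eq_ker _).1
    (HomologySequence.exact₃ T hT i (i + 1) rfl))
  infer_instance

lemma IsPerfectObj.isHomologicallyFinite {X : DerivedCategory (ModuleCat.{u} S)}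
    (hX : IsPerfectObj X) : IsHomologicallyFinite X := by
  obtain ⟨F, hF, ⟨e⟩⟩ := hX
  refine .of_iso e (isHomologicallyFinite_Q_obj_iff.2 fun i ↦ ?_)
  have := hF.finite_X i
  have := Module.Finite.of_injective (F.iCycles i).hom
    ((ModuleCat.mono_iff_injective _).1 inferInstance)
  exact Module.Finite.of_surjective (F.homologyπ i).hom
    ((ModuleCat.epi_iff_surjective _).1 inferInstance)

variable {R} in
lemma IsPerfect.moduleFinite_homology [IsNoetherianRing R] {K : CochainComplex (ModuleCat.{0} R) ℤ}
    (hK : IsPerfect R K) : ∀ i, Module.Finite R (K.homology i) := by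
  let := HasDerivedCategory.standard (ModuleCat.{0} R)
  exact isHomologicallyFinite_Q_obj_iff.1 ((isPerfect_iff K).1 hK).isHomologicallyFinite

end FiniteHomology

section ResidueField

open DerivedCategory IsLocalRing Pretriangulated

variable {S : Type u} [CommRing S] [IsLocalRing S] [HasDerivedCategory.{w} (ModuleCat.{u} S)]
  (X : DerivedCategory (ModuleCat.{u} S))

lemma exists_comp_eq_singleFunctor_map_residue (b : ℤ) [X.IsLE b]
    (hfin : IsHomologicallyFinite X) (hX : ¬ IsZero X) :
    ∃ t ≤ b, ∃ (f : (singleFunctor _ t).obj (ModuleCat.of S S) ⟶ X)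
      (g : X ⟶ (singleFunctor _ t).obj (ModuleCat.of S (ResidueField S))),
      f ≫ g = (singleFunctor _ t).map (ModuleCat.ofHom (Algebra.linearMap S _)) := by
  obtain ⟨t, htb, _, ht⟩ := exists_isLE_and_not_isZero_homologyFunctor_obj hX b
  have : Nontrivial ((homologyFunctor (ModuleCat.{u} S) t).obj X) :=
    not_subsingleton_iff_nontrivial.1 fun _ ↦ ht (ModuleCat.isZero_of_subsingleton _)
  have := hfin t
  obtain ⟨x, y, hxy⟩ := exists_comp_eq_linearMap_residueField S
    ((homologyFunctor (ModuleCat.{u} S) t).obj X)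
  have hxy' := (ModuleCat.ofHom_comp x y).symm.trans (congrArg ModuleCat.ofHom hxy)
  let e := singleFunctorCompHomologyFunctorIso (ModuleCat.{u} S) t
  obtain ⟨f, hf⟩ := homologyFunctor_map_fromSingle_surjective (ModuleCat.of S S) X t
    (e.hom.app _ ≫ ModuleCat.ofHom x)
  obtain ⟨g, hg⟩ := homologyFunctor_map_toSingle_surjective X (ModuleCat.of S (ResidueField S)) t
    (ModuleCat.ofHom y ≫ e.inv.app _)
  refine ⟨t, htb, f, g, homologyFunctor_map_fromSingle_injective _ _ t ?_⟩
  dsimp only at hf hg ⊢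
  rw [Functor.map_comp, hf, hg, Category.assoc, reassoc_of% hxy']
  exact NatIso.naturality_2 e _

lemma isZero_of_hom_residueField_eq_zero (b : ℤ) [X.IsLE b]
    (hfin : IsHomologicallyFinite X)
    (h : ∀ n ≤ b, ∀ g : X ⟶ (singleFunctor _ n).obj (ModuleCat.of S (ResidueField S)), g = 0) :
    IsZero X := by
  by_contra hX
  obtain ⟨t, htb, f, g, hfg⟩ := exists_comp_eq_singleFunctor_map_residue X b hfin hX
  rw [h t htb g, comp_zero] at hfg
  have h0 : ModuleCat.ofHom (Algebra.linearMap S (ResidueField S)) = 0 :=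
    (singleFunctor _ t).map_injective (hfg.symm.trans (Functor.map_zero _ _ _).symm)
  simpa using congr($h0 (1 : S))

lemma exists_epi_homologyFunctor_map_and_fac_residueField (t : ℤ) [X.IsLE t]
    [Module.Finite S ((homologyFunctor (ModuleCat.{u} S) t).obj X)] :
    ∃ (m : ℕ) (f : (singleFunctor _ t).obj (ModuleCat.of S (Fin m → S)) ⟶ X),
      Epi ((homologyFunctor _ t).map f) ∧
        ∀ (j : ℤ) (h : _ ⟶ (singleFunctor _ j).obj (ModuleCat.of S (ResidueField S))),
          ∃ h', f ≫ h' = h := by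
  obtain ⟨m, π, hπ, hlift⟩ :=
    exists_surjective_lift_residueField S ((homologyFunctor (ModuleCat.{u} S) t).obj X)
  let e := singleFunctorCompHomologyFunctorIso (ModuleCat.{u} S) t
  have : Projective (ModuleCat.of S (Fin m → S)) :=
    (IsProjective.iff_projective (R := S) (Fin m → S)).1 inferInstance
  have : Epi (ModuleCat.ofHom π) := (ModuleCat.epi_iff_surjective _).2 hπ
  obtain ⟨f, hf⟩ := homologyFunctor_map_fromSingle_surjective (ModuleCat.of S (Fin m → S)) X t
    (e.hom.app _ ≫ ModuleCat.ofHom π)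
  dsimp only at hf
  refine ⟨m, f, by rw [hf]; infer_instance, exists_fac_of_homologyFunctor_map_fac f fun φ ↦ ?_⟩
  obtain ⟨y, hy⟩ := hlift (e.inv.app _ ≫ φ ≫ e.hom.app _).hom
  have hy' := (ModuleCat.ofHom_comp π y).symm.trans (congrArg ModuleCat.ofHom hy)
  refine ⟨ModuleCat.ofHom y ≫ e.inv.app _, ?_⟩
  rw [hf, Category.assoc, reassoc_of% hy', ModuleCat.ofHom_hom]
  simp

variable [IsNoetherianRing S]

lemma isPerfectObj_of_hom_residueField_eq_zero (a : ℤ) (N : ℕ) [hX : X.IsLE (a + N)]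
    (hfin : IsHomologicallyFinite X)
    (h : ∀ n ≤ a, ∀ g : X ⟶ (singleFunctor _ n).obj (ModuleCat.of S (ResidueField S)), g = 0) :
    IsPerfectObj X := by
  induction N generalizing X with
  | zero =>
    have : X.IsLE a := by simpa using hX
    exact .of_isZero (isZero_of_hom_residueField_eq_zero X a hfin h)
  | succ N ih =>
    have : X.IsLE (a + N + 1) := by rwa [Nat.cast_succ, ← add_assoc] at hX
    have := hfin (a + N + 1)
    obtain ⟨m, f, _, hf⟩ := exists_epi_homologyFunctor_map_and_fac_residueField X (a + N + 1)
    obtain ⟨Y, u, v, hT⟩ := distinguished_cocone_triangle f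
    have hY : Y.IsLE (a + N) := isLE_of_distTriang hT (a + N)
    have hA : IsPerfectObj ((singleFunctor _ (a + N + 1)).obj (ModuleCat.of S (Fin m → S))) :=
      .single _ _
    exact hA.obj₂ hT <| ih Y (.obj₃ hT hA.isHomologicallyFinite hfin) fun n hn ↦
      hom_obj₃_eq_zero hT (h n hn) (hf (n + 1))

end ResidueField

section TensorProduct

open HomologicalComplex

variable {C : Type u} [Category.{v} C] [MonoidalCategory C] [Preadditive C]
  [(curriedTensor C).Additive] [∀ X : C, ((curriedTensor C).obj X).Additive]
  {K L : CochainComplex C ℤ} [HasTensor K L] {n t : ℤ} {V W : C}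

lemma ιTensorObj_d (i l j j' : ℤ) (h : i + l = j) (h' : j + 1 = j') :
    ιTensorObj K L i l j h ≫ (tensorObj K L).d j j' =
      K.d i (i + 1) ▷ L.X l ≫ ιTensorObj K L (i + 1) l j' (by lia) +
        i.negOnePow • (K.X i ◁ L.d l (l + 1) ≫ ιTensorObj K L i (l + 1) j' (by lia)) := by
  rw [mapBifunctor.d_eq, Preadditive.comp_add, mapBifunctor.ι_D₁, mapBifunctor.ι_D₂,
    mapBifunctor.d₁_eq K L (curriedTensor C) (.up ℤ) (i₁ := i) (i₁' := i + 1) rfl l j'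
      (show i + 1 + l = j' by lia),
    mapBifunctor.d₂_eq K L (curriedTensor C) (.up ℤ) i (i₂ := l) (i₂' := l + 1) rfl j'
      (show i + (l + 1) = j' by lia)]
  exact congr($(one_smul ℤˣ _) + _)

lemma whiskerLeft_ιTensorObj_d (z : W ⟶ L.X t) (hz : z ≫ L.d t (t + 1) = 0) :
    K.X n ◁ z ≫ ιTensorObj K L n t (n + t) rfl ≫ (tensorObj K L).d (n + t) (n + t + 1) =
      K.d n (n + 1) ▷ W ≫ K.X (n + 1) ◁ z ≫ ιTensorObj K L (n + 1) t (n + t + 1) (by lia) := by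
  have h₀ : K.X n ◁ (0 : W ⟶ L.X (t + 1)) = 0 := ((curriedTensor C).obj (K.X n)).map_zero _ _
  rw [ιTensorObj_d n t (n + t) (n + t + 1) rfl rfl, Preadditive.comp_add,
    Linear.comp_units_smul, ← whiskerLeft_comp_assoc, hz, h₀, zero_comp, smul_zero, add_zero,
    whisker_exchange_assoc]

/-- The morphism out of a tensor product of complexes induced by morphisms out of one component of
each factor. It vanishes on the other summands. -/
noncomputable def tensorObjDesc (ψ : K.X n ⟶ V) (φ : L.X t ⟶ W) :
    (tensorObj K L).X (n + t) ⟶ V ⊗ W :=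
  mapBifunctorDesc fun i j (h : i + j = n + t) ↦ if hi : i = n then
    ((K.XIsoOfEq hi).hom ≫ ψ) ⊗ₘ ((L.XIsoOfEq (by lia)).hom ≫ φ) else 0

lemma ι_tensorObjDesc (ψ : K.X n ⟶ V) (φ : L.X t ⟶ W) :
    ιTensorObj K L n t (n + t) rfl ≫ tensorObjDesc ψ φ = ψ ⊗ₘ φ := by
  simp [tensorObjDesc]

lemma ι_tensorObjDesc_eq_zero (ψ : K.X n ⟶ V) (φ : L.X t ⟶ W) {i l : ℤ} (h : i + l = n + t)
    (hi : i ≠ n) : ιTensorObj K L i l (n + t) h ≫ tensorObjDesc ψ φ = 0 := by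
  simp [tensorObjDesc, hi]

lemma whiskerRight_ι_tensorObjDesc {ψ : K.X n ⟶ V} (hψ : ∀ i, K.d i n ≫ ψ = 0) (φ : L.X t ⟶ W)
    (i i' l : ℤ) (h : i' + l = n + t) :
    K.d i i' ▷ L.X l ≫ ιTensorObj K L i' l (n + t) h ≫ tensorObjDesc ψ φ = 0 := by
  by_cases hi : i' = n
  · obtain rfl : l = t := by lia
    subst hi
    have h₀ : (0 : K.X i ⟶ V) ▷ L.X l = 0 := congr_app ((curriedTensor C).map_zero _ _) _
    rw [ι_tensorObjDesc, MonoidalCategory.tensorHom_def, ← comp_whiskerRight_assoc, hψ, h₀,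
      zero_comp]
  · rw [ι_tensorObjDesc_eq_zero ψ φ h hi, comp_zero]

lemma whiskerLeft_ι_tensorObjDesc (ψ : K.X n ⟶ V) {φ : L.X t ⟶ W} (hφ : ∀ i, L.d i t ≫ φ = 0)
    (i l l' : ℤ) (h : i + l' = n + t) :
    K.X i ◁ L.d l l' ≫ ιTensorObj K L i l' (n + t) h ≫ tensorObjDesc ψ φ = 0 := by
  by_cases hi : i = n
  · obtain rfl : l' = t := by lia
    subst hi
    have h₀ : K.X i ◁ (0 : L.X l ⟶ W) = 0 := ((curriedTensor C).obj (K.X i)).map_zero _ _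
    rw [ι_tensorObjDesc, tensorHom_def', ← whiskerLeft_comp_assoc, hφ, h₀, zero_comp]
  · rw [ι_tensorObjDesc_eq_zero ψ φ h hi, comp_zero]

lemma d_tensorObjDesc {ψ : K.X n ⟶ V} {φ : L.X t ⟶ W} (hψ : ∀ i, K.d i n ≫ ψ = 0)
    (hφ : ∀ i, L.d i t ≫ φ = 0) (j : ℤ) :
    (tensorObj K L).d j (n + t) ≫ tensorObjDesc ψ φ = 0 := by
  by_cases hj : j + 1 = n + t
  · refine mapBifunctor.hom_ext fun i l (h : i + l = j) ↦ ?_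
    change ιTensorObj K L i l j h ≫ _ ≫ _ = _
    rw [← Category.assoc, ιTensorObj_d i l j (n + t) h hj, Preadditive.add_comp,
      Linear.units_smul_comp, Category.assoc, Category.assoc,
      whiskerRight_ι_tensorObjDesc hψ φ, whiskerLeft_ι_tensorObjDesc ψ hφ, smul_zero, add_zero,
      comp_zero]
  · rw [HomologicalComplex.shape _ _ _ hj, zero_comp]

/-- The cocycles `z` and `φ` induce maps `Hom(K, V) ⟶ Hom(K ⊗ L, V) ⟶ Hom(K, V)` (up to shifts by
`t`) whose composition is the identity by `hμ`. -/
lemma HomExactAt.of_tensorObj (h : HomExactAt (tensorObj K L) V (n + t)) {z : 𝟙_ C ⟶ L.X t}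
    {φ : L.X t ⟶ W} (hz : z ≫ L.d t (t + 1) = 0) (hφ : ∀ i, L.d i t ≫ φ = 0) (μ : V ⊗ W ⟶ V)
    (hμ : V ◁ (z ≫ φ) ≫ μ = (ρ_ V).hom) : HomExactAt K V n := by
  intro ψ hψ
  obtain ⟨s, hs⟩ := h (tensorObjDesc ψ φ ≫ μ) fun j ↦ by
    rw [reassoc_of% d_tensorObjDesc hψ hφ j, zero_comp]
  refine ⟨(ρ_ _).inv ≫ K.X (n + 1) ◁ z ≫ ιTensorObj K L (n + 1) t (n + t + 1) (by lia) ≫ s, ?_⟩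
  calc
    _ = (ρ_ _).inv ≫ K.X n ◁ z ≫ ιTensorObj K L n t (n + t) rfl ≫
        (tensorObj K L).d (n + t) (n + t + 1) ≫ s := by
      rw [rightUnitor_inv_naturality_assoc, reassoc_of% whiskerLeft_ιTensorObj_d z hz]
    _ = (ρ_ _).inv ≫ K.X n ◁ z ≫ (ψ ⊗ₘ φ) ≫ μ := by rw [hs, reassoc_of% ι_tensorObjDesc ψ φ]
    _ = (ρ_ _).inv ≫ ψ ▷ 𝟙_ C ≫ V ◁ (z ≫ φ) ≫ μ := by
      rw [MonoidalCategory.tensorHom_def, Category.assoc, whisker_exchange_assoc, whiskerLeft_comp,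
        Category.assoc]
    _ = ψ := by rw [hμ, rightUnitor_naturality, Iso.inv_hom_id_assoc]

end TensorProduct

section DerivedTensorProduct

open DerivedCategory IsLocalRing
open HomologicalComplex hiding homologyFunctor

variable {R} {P L : CochainComplex (ModuleCat.{0} R) ℤ}

lemma IsBoundedAboveProjective.tensorObj (hP : IsBoundedAboveProjective P)
    (hL : IsBoundedAboveProjective L) :
    IsBoundedAboveProjective (HomologicalComplex.tensorObj P L) where
  isZero_X := by
    obtain ⟨a, ha⟩ := hP.isZero_X
    obtain ⟨b, hb⟩ := hL.isZero_X
    refine ⟨a + b, fun n hn ↦ (IsZero.iff_id_eq_zero _).2 ?_⟩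
    refine mapBifunctor.hom_ext fun i j (h : i + j = n) ↦ IsZero.eq_of_src ?_ _ _
    by_cases hi : a < i
    · exact Functor.map_isZero (tensorRight (L.X j)) (ha i hi)
    · exact Functor.map_isZero (tensorLeft (P.X i)) (hb j (by lia))
  projective_X n := by
    have := hP.projective_X
    have := hL.projective_X
    have (i j : ℤ) : Projective (((curriedTensor (ModuleCat R)).obj (P.X i)).obj (L.X j)) :=
      (IsProjective.iff_projective (R := R) (TensorProduct R (P.X i) (L.X j))).1 inferInstance
    refine (IsProjective.iff_projective _).2 ⟨fun f e _ ↦ ?_⟩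
    exact ⟨mapBifunctorDesc fun i j h ↦
        Projective.factorThru (ιMapBifunctor P L (curriedTensor _) (.up ℤ) i j n h ≫ f) e,
      mapBifunctor.hom_ext fun i j h ↦ by
        rw [ι_mapBifunctorDesc_assoc, Projective.factorThru_comp]⟩

variable [HasDerivedCategory.{w} (ModuleCat.{0} R)]

lemma IsBoundedAboveProjective.exists_isLE (hP : IsBoundedAboveProjective P) :
    ∃ b, (Q.obj P).IsLE b := by
  obtain ⟨b, hb⟩ := hP.isZero_X
  have : P.IsStrictlyLE b := (P.isStrictlyLE_iff b).2 hb
  exact ⟨b, inferInstance⟩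

variable [IsLocalRing R]

lemma exists_comp_eq_residue (hL : IsBoundedAboveProjective L)
    (hfin : IsHomologicallyFinite (Q.obj L)) (h₀ : ¬ IsZero (Q.obj L)) :
    ∃ (t : ℤ) (z : 𝟙_ (ModuleCat.{0} R) ⟶ L.X t) (φ : L.X t ⟶ ModuleCat.of R (ResidueField R)),
      z ≫ L.d t (t + 1) = 0 ∧ (∀ i, L.d i t ≫ φ = 0) ∧
        z ≫ φ = ModuleCat.ofHom (Algebra.linearMap R (ResidueField R)) := by
  have := hL.isKProjective
  obtain ⟨b, _⟩ := hL.exists_isLE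
  obtain ⟨t, -, f, g, hfg⟩ := exists_comp_eq_singleFunctor_map_residue (Q.obj L) b hfin h₀
  obtain ⟨f, rfl⟩ := Q_map_surjective ((single _ (.up ℤ) t).obj (ModuleCat.of R R)) L f
  obtain ⟨g, rfl⟩ := Q_map_surjective L
    ((single _ (.up ℤ) t).obj (ModuleCat.of R (ResidueField R))) g
  obtain ⟨r, hr⟩ := (single _ (.up ℤ) t).map_surjective (f ≫ g)
  obtain rfl : r = ModuleCat.ofHom (Algebra.linearMap R (ResidueField R)) :=
    (singleFunctor _ t).map_injective <|
      (congrArg Q.map hr).trans ((Q.map_comp f g).trans hfg)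
  have hfg' : f.f t ≫ g.f t = _ := (congr_arg (fun a ↦ a.f t) hr).symm.trans
    (single_map_f_self (.up ℤ) t _)
  refine ⟨t, (singleObjXSelf (.up ℤ) t (ModuleCat.of R R)).inv ≫ f.f t,
    g.f t ≫ (singleObjXSelf (.up ℤ) t _).hom, ?_, fun i ↦ ?_, ?_⟩
  · rw [Category.assoc, f.comm, single_obj_d, zero_comp, comp_zero]
  · rw [← g.comm_assoc, single_obj_d, zero_comp, comp_zero]
  · rw [Category.assoc, reassoc_of% hfg']
    simp

lemma isPerfectObj_of_isPerfectObj_tensorObj [IsNoetherianRing R]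
    (hP : IsBoundedAboveProjective P) (hPfin : IsHomologicallyFinite (Q.obj P))
    (hL : IsBoundedAboveProjective L) (hLfin : IsHomologicallyFinite (Q.obj L))
    (hL₀ : ¬ IsZero (Q.obj L)) (hPL : IsPerfectObj (Q.obj (HomologicalComplex.tensorObj P L))) :
    IsPerfectObj (Q.obj P) := by
  have := hP.isKProjective
  have := (hP.tensorObj hL).isKProjective
  obtain ⟨t, z, φ, hz, hφ, hzφ⟩ := exists_comp_eq_residue hL hLfin hL₀
  obtain ⟨a, ha⟩ := hPL.exists_hom_single_eq_zero
  let k := ModuleCat.of R (ResidueField R)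
  let μ : k ⊗ k ⟶ k := ModuleCat.ofHom (LinearMap.mul' R (ResidueField R))
  have hμ : k ◁ (z ≫ φ) ≫ μ = (ρ_ k).hom := by
    rw [hzφ]
    refine ModuleCat.hom_ext (TensorProduct.ext' fun (x : ResidueField R) (r : R) ↦ ?_)
    exact (mul_comm _ _).trans (Algebra.smul_def r x).symm
  have hP₀ (n : ℤ) (hn : n + t < a) (g : Q.obj P ⟶ (singleFunctor _ n).obj k) : g = 0 :=
    have hPLn := (homExactAt_iff _ k (n + t)).2 (ha _ hn k)
    (homExactAt_iff P k n).1 (hPLn.of_tensorObj hz hφ μ hμ) g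
  obtain ⟨b, hb⟩ := hP.exists_isLE
  let a' := a - t - 1
  have : (Q.obj P).IsLE (a' + (b - a').toNat) :=
    TStructure.t.isLE_of_le _ b _ (by lia)
  exact isPerfectObj_of_hom_residueField_eq_zero _ a' (b - a').toNat hPfin fun n hn g ↦
    hP₀ n (by lia) g

end DerivedTensorProduct

variable {R} in
theorem stmt0_general [IsNoetherianRing R] [IsLocalRing R]
    (M N : CochainComplex (ModuleCat R) ℤ)
    (hMfin : ∀ i : ℤ, Module.Finite R (M.homology i))
    (hNfin : ∀ i : ℤ, Module.Finite R (N.homology i))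
    (hNnonzero : ¬ ∀ i : ℤ, IsZero (N.homology i))
    (hMN : ∃ (P Q : CochainComplex (ModuleCat R) ℤ) (p : P ⟶ M) (q : Q ⟶ N),
      IsProjRes R p ∧ IsProjRes R q ∧ IsPerfect R (HomologicalComplex.tensorObj P Q)) :
    IsPerfect R M := by
  let := HasDerivedCategory.standard (ModuleCat.{0} R)
  obtain ⟨P, L, p, q, ⟨_, hPb, hPproj⟩, ⟨_, hLb, hLproj⟩, hPL⟩ := hMN
  let eM := asIso (DerivedCategory.Q.map p)
  let eN := asIso (DerivedCategory.Q.map q)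
  have hN₀ : ¬ IsZero (DerivedCategory.Q.obj N) := fun h ↦ hNnonzero fun i ↦
    (Functor.map_isZero (DerivedCategory.homologyFunctor _ i) h).of_iso
      ((DerivedCategory.homologyFunctorFactors _ i).app N).symm
  rw [isPerfect_iff] at hPL ⊢
  rw [← isHomologicallyFinite_Q_obj_iff] at hMfin hNfin
  exact .of_iso eM <| isPerfectObj_of_isPerfectObj_tensorObj ⟨hPb, hPproj⟩ (hMfin.of_iso eM.symm)
    ⟨hLb, hLproj⟩ (hNfin.of_iso eN.symm) (fun h ↦ hN₀ (h.of_iso eN.symm)) hPL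

/-- Over a commutative noetherian local ring `R`: if `M` is a (homologically)
bounded-below complex with finitely generated homology, `N` is a perfect complex which
is nonzero in `D(R)` (i.e. not acyclic), and the derived tensor product `M ⊗^L_R N`
(computed by tensoring projective resolutions) is perfect, then `M` is perfect.
(Cohomological indexing: homological degree `i` corresponds to cochain degree `-i`,
so "bounded below" means the complex vanishes in large cochain degrees.) -/
theorem stmt0 [IsNoetherianRing R] [IsLocalRing R]
    (M N : CochainComplex (ModuleCat R) ℤ)
    (hMbdd : ∃ n : ℤ, ∀ i : ℤ, n < i → IsZero (M.X i))
    (hMfin : ∀ i : ℤ, Module.Finite R (M.homology i))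
    (hNperf : IsPerfect R N)
    (hNnonzero : ¬ ∀ i : ℤ, IsZero (N.homology i))
    (hMN : ∃ (P Q : CochainComplex (ModuleCat R) ℤ) (p : P ⟶ M) (q : Q ⟶ N),
      IsProjRes R p ∧ IsProjRes R q ∧ IsPerfect R (HomologicalComplex.tensorObj P Q)) :
    IsPerfect R M :=
  stmt0_general M N hMfin hNperf.moduleFinite_homology hNnonzero hMN
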